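/- arXiv:2205.03723 — 2 statements merged into one kernel-verified Lean document; each statement's English description precedes it below -/
import Mathlib

section
/- If (ρ, β, V) is a representation of a Hom-Lie color Hom-algebra (A, [·,·], ε, α), then A ⊕ V with bracket [x₁+v₁, x₂+v₂]' = [x₁,x₂] + ρ(x₁)v₂ − ε(v₁,x₂)ρ(x₂)v₁ and twisting α⊕β is a Hom-Lie color Hom-algebra. -/
open scoped TensorProduct

section ColorHomDefs

variable {K Γ A V : Type*} [Field K] [AddCommGroup Γ]
variable [AddCommGroup A] [Module K A] [AddCommGroup V] [Module K V]

/-- A commutation factor (skew-symmetric bicharacter) on `Γ` with values in `K`. -/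
def IsCommFactor (ε : Γ → Γ → K) : Prop :=
  (∀ a b, ε a b ≠ 0) ∧ (∀ a b, ε a b * ε b a = 1) ∧
    (∀ a b c, ε a (b + c) = ε a b * ε a c) ∧
    (∀ a b c, ε (a + b) c = ε a c * ε b c)

/-- The (even bilinear) product respects the grading. -/
def GradedMul (𝒜 : Γ → Submodule K A) (μ : A →ₗ[K] A →ₗ[K] A) : Prop :=
  ∀ ⦃γ₁ γ₂ : Γ⦄ ⦃x y : A⦄, x ∈ 𝒜 γ₁ → y ∈ 𝒜 γ₂ → μ x y ∈ 𝒜 (γ₁ + γ₂)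

/-- An even linear map. -/
def GradedEnd (𝒜 : Γ → Submodule K A) (f : A →ₗ[K] A) : Prop :=
  ∀ ⦃γ : Γ⦄ ⦃x : A⦄, x ∈ 𝒜 γ → f x ∈ 𝒜 γ

/-- ε-commutativity on homogeneous elements. -/
def IsEpsComm (𝒜 : Γ → Submodule K A) (ε : Γ → Γ → K) (μ : A →ₗ[K] A →ₗ[K] A) : Prop :=
  ∀ ⦃γ₁ γ₂ : Γ⦄ ⦃x y : A⦄, x ∈ 𝒜 γ₁ → y ∈ 𝒜 γ₂ → μ x y = ε γ₁ γ₂ • μ y x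

/-- Hom-associativity on homogeneous elements. -/
def IsHomAssoc (𝒜 : Γ → Submodule K A) (μ : A →ₗ[K] A →ₗ[K] A) (α : A →ₗ[K] A) : Prop :=
  ∀ ⦃γ₁ γ₂ γ₃ : Γ⦄ ⦃x y z : A⦄, x ∈ 𝒜 γ₁ → y ∈ 𝒜 γ₂ → z ∈ 𝒜 γ₃ →
    μ (μ x y) (α z) = μ (α x) (μ y z)

/-- The two defining identities of a Hom-Novikov color Hom-algebra. -/
def IsHomNovikov (𝒜 : Γ → Submodule K A) (ε : Γ → Γ → K) (μ : A →ₗ[K] A →ₗ[K] A)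
    (α : A →ₗ[K] A) : Prop :=
  (∀ ⦃γ₁ γ₂ γ₃ : Γ⦄ ⦃x y z : A⦄, x ∈ 𝒜 γ₁ → y ∈ 𝒜 γ₂ → z ∈ 𝒜 γ₃ →
      μ (μ x y) (α z) - μ (α x) (μ y z)
        = ε γ₁ γ₂ • (μ (μ y x) (α z) - μ (α y) (μ x z))) ∧
  (∀ ⦃γ₁ γ₂ γ₃ : Γ⦄ ⦃x y z : A⦄, x ∈ 𝒜 γ₁ → y ∈ 𝒜 γ₂ → z ∈ 𝒜 γ₃ →
      μ (μ x y) (α z) = ε γ₂ γ₃ • μ (μ x z) (α y))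

/-- ε-skew-symmetry and the ε-Hom-Jacobi identity for a bilinear bracket. -/
def IsHomLie (𝒜 : Γ → Submodule K A) (ε : Γ → Γ → K) (br : A →ₗ[K] A →ₗ[K] A)
    (α : A →ₗ[K] A) : Prop :=
  (∀ ⦃γ₁ γ₂ : Γ⦄ ⦃x y : A⦄, x ∈ 𝒜 γ₁ → y ∈ 𝒜 γ₂ → br x y = -(ε γ₁ γ₂ • br y x)) ∧
  (∀ ⦃γ₁ γ₂ γ₃ : Γ⦄ ⦃x y z : A⦄, x ∈ 𝒜 γ₁ → y ∈ 𝒜 γ₂ → z ∈ 𝒜 γ₃ →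
      ε γ₃ γ₁ • br (α x) (br y z) + ε γ₁ γ₂ • br (α y) (br z x)
        + ε γ₂ γ₃ • br (α z) (br x y) = 0)

/-- Compatibility conditions of a Hom-Novikov-Poisson color Hom-algebra. -/
def HNPCompat (𝒜 : Γ → Submodule K A) (ε : Γ → Γ → K) (μ d : A →ₗ[K] A →ₗ[K] A)
    (α : A →ₗ[K] A) : Prop :=
  (∀ ⦃γ₁ γ₂ γ₃ : Γ⦄ ⦃x y z : A⦄, x ∈ 𝒜 γ₁ → y ∈ 𝒜 γ₂ → z ∈ 𝒜 γ₃ →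
      d (μ x y) (α z) = ε γ₂ γ₃ • μ (d x z) (α y)) ∧
  (∀ ⦃γ₁ γ₂ γ₃ : Γ⦄ ⦃x y z : A⦄, x ∈ 𝒜 γ₁ → y ∈ 𝒜 γ₂ → z ∈ 𝒜 γ₃ →
      μ (d x y) (α z) - d (α x) (μ y z)
        = ε γ₁ γ₂ • (μ (d y x) (α z) - d (α y) (μ x z)))

/-- Hom-Novikov-Poisson color Hom-algebra: `μ` is the ε-commutative Hom-associative
product, `d` the Hom-Novikov product. -/
def IsHNP (𝒜 : Γ → Submodule K A) (ε : Γ → Γ → K) (μ d : A →ₗ[K] A →ₗ[K] A)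
    (α : A →ₗ[K] A) : Prop :=
  GradedMul 𝒜 μ ∧ GradedMul 𝒜 d ∧ GradedEnd 𝒜 α ∧
    IsEpsComm 𝒜 ε μ ∧ IsHomAssoc 𝒜 μ α ∧ IsHomNovikov 𝒜 ε d α ∧ HNPCompat 𝒜 ε μ d α

/-- Admissibility: the left Hom-associator mixing the two products vanishes. -/
def IsAdmissibleHNP (𝒜 : Γ → Submodule K A) (ε : Γ → Γ → K) (μ d : A →ₗ[K] A →ₗ[K] A)
    (α : A →ₗ[K] A) : Prop :=
  IsHNP 𝒜 ε μ d α ∧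
    ∀ ⦃γ₁ γ₂ γ₃ : Γ⦄ ⦃x y z : A⦄, x ∈ 𝒜 γ₁ → y ∈ 𝒜 γ₂ → z ∈ 𝒜 γ₃ →
      d (μ x y) (α z) = d (α x) (μ y z)

/-- Gelfand-Dorfman compatibility for a bilinear bracket. -/
def GDCompat (𝒜 : Γ → Submodule K A) (ε : Γ → Γ → K) (μ br : A →ₗ[K] A →ₗ[K] A)
    (α : A →ₗ[K] A) : Prop :=
  ∀ ⦃γ₁ γ₂ γ₃ : Γ⦄ ⦃x y z : A⦄, x ∈ 𝒜 γ₁ → y ∈ 𝒜 γ₂ → z ∈ 𝒜 γ₃ →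
    μ (α y) (br x z)
      = ε γ₂ γ₁ • br (α x) (μ y z) - ε (γ₁ + γ₂) γ₃ • br (α z) (μ y x)
        + μ (br y x) (α z) - ε γ₁ γ₃ • μ (br y z) (α x)

/-- The transposed Hom-ε-Leibniz identity. -/
def TransposedLeibniz (𝒜 : Γ → Submodule K A) (ε : Γ → Γ → K) (μ br : A →ₗ[K] A →ₗ[K] A)
    (α : A →ₗ[K] A) : Prop :=
  ∀ ⦃γ₁ γ₂ γ₃ : Γ⦄ ⦃x y z : A⦄, x ∈ 𝒜 γ₁ → y ∈ 𝒜 γ₂ → z ∈ 𝒜 γ₃ →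
    (2 : K) • μ (α z) (br x y) = br (μ z x) (α y) + ε γ₃ γ₁ • br (α x) (μ z y)

/-- The ε-commutator bracket of homogeneous elements of degrees `γ`, `δ`. -/
def brkt (ε : Γ → Γ → K) (μ : A →ₗ[K] A →ₗ[K] A) (γ δ : Γ) (x y : A) : A :=
  μ x y - ε γ δ • μ y x

/-- The Yau twist `x ∗ y = α (μ x y)` of a bilinear product. -/
def twistMul (α : A →ₗ[K] A) (μ : A →ₗ[K] A →ₗ[K] A) : A →ₗ[K] A →ₗ[K] A :=
  (LinearMap.llcomp K A A A α).comp μ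

/-- The product `x ⋄ y = μ x (D y)`. -/
def precompMul (D : A →ₗ[K] A) (μ : A →ₗ[K] A →ₗ[K] A) : A →ₗ[K] A →ₗ[K] A :=
  (LinearMap.lcomp K A D).comp μ

/-- Semidirect product of an ε-commutative Hom-associative color Hom-algebra with a
bimodule, on homogeneous elements of degrees `γ₁`, `γ₂`. -/
def sdDot (ε : Γ → Γ → K) (μ : A →ₗ[K] A →ₗ[K] A) (s : A →ₗ[K] V →ₗ[K] V)
    (γ₁ γ₂ : Γ) (X Y : A × V) : A × V :=
  (μ X.1 Y.1, s X.1 Y.2 + ε γ₁ γ₂ • s Y.1 X.2)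

/-- Semidirect product of a Hom-Novikov color Hom-algebra with a bimodule. -/
def sdDiam (μ : A →ₗ[K] A →ₗ[K] A) (l r : A →ₗ[K] V →ₗ[K] V) (X Y : A × V) : A × V :=
  (μ X.1 Y.1, l X.1 Y.2 + r Y.1 X.2)

/-- Semidirect product bracket of a Hom-Lie color Hom-algebra with a representation. -/
def sdBr (ε : Γ → Γ → K) (br : A →ₗ[K] A →ₗ[K] A) (ρ : A →ₗ[K] V →ₗ[K] V)
    (γ₁ γ₂ : Γ) (X Y : A × V) : A × V :=
  (br X.1 Y.1, ρ X.1 Y.2 - ε γ₁ γ₂ • ρ Y.1 X.2)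

/-- The twisting map `α ⊕ β` on `A × V`. -/
def sdEnd (α : A →ₗ[K] A) (β : V →ₗ[K] V) (X : A × V) : A × V := (α X.1, β X.2)

end ColorHomDefs

/-!
In the `V`-component of the ε-Hom-Jacobi sum for `x + u`, `y + v`, `z + w`, collect the terms
according to which of the vectors `u`, `v`, `w` is acted on. Since `ε b c * ε c b = 1`, each of the
three groups is a multiple of one instance of the representation identity, so it vanishes by itself.
-/

section SemidirectProduct

variable {K Γ A V : Type*} [Field K] [AddCommGroup Γ]
variable [AddCommGroup A] [Module K A] [AddCommGroup V] [Module K V]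
variable {𝒜 : Γ → Submodule K A} {𝒱 : Γ → Submodule K V} {ε : Γ → Γ → K}
variable {br : A →ₗ[K] A →ₗ[K] A} {α : A →ₗ[K] A} {β : V →ₗ[K] V} {ρ : A →ₗ[K] V →ₗ[K] V}

/-- Evenness of an action `ρ` of a `Γ`-graded algebra on a `Γ`-graded module. -/
def GradedAction (𝒜 : Γ → Submodule K A) (𝒱 : Γ → Submodule K V)
    (ρ : A →ₗ[K] V →ₗ[K] V) : Prop :=
  ∀ ⦃γ₁ γ₂ : Γ⦄ ⦃x : A⦄ ⦃v : V⦄, x ∈ 𝒜 γ₁ → v ∈ 𝒱 γ₂ → ρ x v ∈ 𝒱 (γ₁ + γ₂)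

/-- The identity defining a representation `(ρ, β, V)` of a Hom-Lie color Hom-algebra, on
homogeneous elements. Evenness of `ρ` is stated separately, as `GradedAction`. -/
def RepCompat (𝒜 : Γ → Submodule K A) (𝒱 : Γ → Submodule K V) (ε : Γ → Γ → K)
    (br : A →ₗ[K] A →ₗ[K] A) (α : A →ₗ[K] A) (β : V →ₗ[K] V)
    (ρ : A →ₗ[K] V →ₗ[K] V) : Prop :=
  ∀ ⦃γ₁ γ₂ γ₃ : Γ⦄ ⦃x y : A⦄ ⦃v : V⦄, x ∈ 𝒜 γ₁ → y ∈ 𝒜 γ₂ → v ∈ 𝒱 γ₃ →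
    ρ (br x y) (β v) = ρ (α x) (ρ y v) - ε γ₁ γ₂ • ρ (α y) (ρ x v)

theorem IsCommFactor.mul_apply_add_right (hε : IsCommFactor ε) (a b c : Γ) :
    ε b c * ε c (a + b) = ε c a := by
  obtain ⟨-, hswap, hadd, -⟩ := hε
  rw [hadd, mul_left_comm, hswap, mul_one]

theorem sdBr_mem_prod (hbr : GradedMul 𝒜 br) (hρ : GradedAction 𝒜 𝒱 ρ) {γ₁ γ₂ : Γ}
    {X Y : A × V} (hX : X ∈ (𝒜 γ₁).prod (𝒱 γ₁)) (hY : Y ∈ (𝒜 γ₂).prod (𝒱 γ₂)) :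
    sdBr ε br ρ γ₁ γ₂ X Y ∈ (𝒜 (γ₁ + γ₂)).prod (𝒱 (γ₁ + γ₂)) := by
  have hYX : ρ Y.1 X.2 ∈ 𝒱 (γ₁ + γ₂) := add_comm γ₂ γ₁ ▸ hρ hY.1 hX.2
  exact ⟨hbr hX.1 hY.1, sub_mem (hρ hX.1 hY.2) (Submodule.smul_mem _ _ hYX)⟩

theorem sdBr_eq_neg_smul_swap (hε : IsCommFactor ε) {γ₁ γ₂ : Γ} {X Y : A × V}
    (hXY : br X.1 Y.1 = -(ε γ₁ γ₂ • br Y.1 X.1)) :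
    sdBr ε br ρ γ₁ γ₂ X Y = -(ε γ₁ γ₂ • sdBr ε br ρ γ₂ γ₁ Y X) := by
  obtain ⟨-, hswap, -, -⟩ := hε
  refine Prod.ext hXY ?_
  calc ρ X.1 Y.2 - ε γ₁ γ₂ • ρ Y.1 X.2
      = -(ε γ₁ γ₂ • ρ Y.1 X.2 - (ε γ₁ γ₂ * ε γ₂ γ₁) • ρ X.1 Y.2) := by
        rw [hswap, one_smul, neg_sub]
    _ = -(ε γ₁ γ₂ • (ρ Y.1 X.2 - ε γ₂ γ₁ • ρ X.1 Y.2)) := by rw [smul_sub, smul_smul]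

theorem RepCompat.smul_bracket_apply (hρ : RepCompat 𝒜 𝒱 ε br α β ρ) (hε : IsCommFactor ε)
    {γ₁ γ₂ γ₃ : Γ} {x y : A} {w : V} (hx : x ∈ 𝒜 γ₁) (hy : y ∈ 𝒜 γ₂) (hw : w ∈ 𝒱 γ₃) :
    (ε γ₂ γ₃ * ε γ₃ (γ₁ + γ₂)) • ρ (br x y) (β w) =
      ε γ₃ γ₁ • ρ (α x) (ρ y w) - (ε γ₁ γ₂ * ε γ₃ γ₁) • ρ (α y) (ρ x w) := by
  rw [hε.mul_apply_add_right, hρ hx hy hw, smul_sub, smul_smul, mul_comm (ε γ₃ γ₁)]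

theorem sdBr_homJacobi (hε : IsCommFactor ε) (hLie : IsHomLie 𝒜 ε br α)
    (hρ : RepCompat 𝒜 𝒱 ε br α β ρ) {γ₁ γ₂ γ₃ : Γ} {X Y Z : A × V}
    (hX : X ∈ (𝒜 γ₁).prod (𝒱 γ₁)) (hY : Y ∈ (𝒜 γ₂).prod (𝒱 γ₂))
    (hZ : Z ∈ (𝒜 γ₃).prod (𝒱 γ₃)) :
    ε γ₃ γ₁ • sdBr ε br ρ γ₁ (γ₂ + γ₃) (sdEnd α β X) (sdBr ε br ρ γ₂ γ₃ Y Z)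
        + ε γ₁ γ₂ • sdBr ε br ρ γ₂ (γ₃ + γ₁) (sdEnd α β Y) (sdBr ε br ρ γ₃ γ₁ Z X)
        + ε γ₂ γ₃ • sdBr ε br ρ γ₃ (γ₁ + γ₂) (sdEnd α β Z) (sdBr ε br ρ γ₁ γ₂ X Y) = 0 := by
  rcases X, Y, Z, hX, hY, hZ with ⟨⟨x, u⟩, ⟨y, v⟩, ⟨z, w⟩, ⟨hx, hu⟩, ⟨hy, hv⟩, ⟨hz, hw⟩⟩
  refine Prod.ext (hLie.2 hx hy hz) ?_
  have terms_u := hρ.smul_bracket_apply hε hy hz hu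
  have terms_v := hρ.smul_bracket_apply hε hz hx hv
  have terms_w := hρ.smul_bracket_apply hε hx hy hw
  simp only [sdBr, sdEnd, Prod.snd_add, Prod.smul_snd, Prod.snd_zero, map_sub, map_smul]
  linear_combination (norm := module) -terms_u - terms_v - terms_w

end SemidirectProduct

/-- semidirect product of a Hom-Lie color Hom-algebra with a
representation `(ρ, β, V)`. -/
theorem semidirect_homLie
    {K Γ A V : Type*} [Field K] [AddCommGroup Γ] [AddCommGroup A] [Module K A]
    [AddCommGroup V] [Module K V]
    (𝒜 : Γ → Submodule K A) (𝒱 : Γ → Submodule K V) (ε : Γ → Γ → K)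
    (br : A →ₗ[K] A →ₗ[K] A) (α : A →ₗ[K] A) (β : V →ₗ[K] V) (ρ : A →ₗ[K] V →ₗ[K] V)
    (hε : IsCommFactor ε) (hbr : GradedMul 𝒜 br) (hα : GradedEnd 𝒜 α)
    (hβ : ∀ ⦃γ : Γ⦄ ⦃v : V⦄, v ∈ 𝒱 γ → β v ∈ 𝒱 γ)
    (hρ : ∀ ⦃γ₁ γ₂ : Γ⦄ ⦃x : A⦄ ⦃v : V⦄, x ∈ 𝒜 γ₁ → v ∈ 𝒱 γ₂ → ρ x v ∈ 𝒱 (γ₁ + γ₂))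
    (hLie : IsHomLie 𝒜 ε br α)
    (hrep : ∀ ⦃γ₁ γ₂ γ₃ : Γ⦄ ⦃x y : A⦄ ⦃v : V⦄, x ∈ 𝒜 γ₁ → y ∈ 𝒜 γ₂ → v ∈ 𝒱 γ₃ →
      ρ (br x y) (β v) = ρ (α x) (ρ y v) - ε γ₁ γ₂ • ρ (α y) (ρ x v)) :
    (∀ ⦃γ₁ γ₂ : Γ⦄ ⦃X Y : A × V⦄, X ∈ (𝒜 γ₁).prod (𝒱 γ₁) → Y ∈ (𝒜 γ₂).prod (𝒱 γ₂) →
        sdBr ε br ρ γ₁ γ₂ X Y ∈ (𝒜 (γ₁ + γ₂)).prod (𝒱 (γ₁ + γ₂))) ∧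
    (∀ ⦃γ₁ γ₂ : Γ⦄ ⦃X Y : A × V⦄, X ∈ (𝒜 γ₁).prod (𝒱 γ₁) → Y ∈ (𝒜 γ₂).prod (𝒱 γ₂) →
        sdBr ε br ρ γ₁ γ₂ X Y = -(ε γ₁ γ₂ • sdBr ε br ρ γ₂ γ₁ Y X)) ∧
    (∀ ⦃γ₁ γ₂ γ₃ : Γ⦄ ⦃X Y Z : A × V⦄, X ∈ (𝒜 γ₁).prod (𝒱 γ₁) →
        Y ∈ (𝒜 γ₂).prod (𝒱 γ₂) → Z ∈ (𝒜 γ₃).prod (𝒱 γ₃) →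
        ε γ₃ γ₁ • sdBr ε br ρ γ₁ (γ₂ + γ₃) (sdEnd α β X) (sdBr ε br ρ γ₂ γ₃ Y Z)
          + ε γ₁ γ₂ • sdBr ε br ρ γ₂ (γ₃ + γ₁) (sdEnd α β Y) (sdBr ε br ρ γ₃ γ₁ Z X)
          + ε γ₂ γ₃ • sdBr ε br ρ γ₃ (γ₁ + γ₂) (sdEnd α β Z) (sdBr ε br ρ γ₁ γ₂ X Y)
          = 0) := by
  refine ⟨?_, ?_, ?_⟩
  · intro γ₁ γ₂ X Y hX hY
    exact sdBr_mem_prod hbr hρ hX hY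
  · intro γ₁ γ₂ X Y hX hY
    exact sdBr_eq_neg_smul_swap hε (hLie.1 hX.1 hY.1)
  · intro γ₁ γ₂ γ₃ X Y Z hX hY hZ
    exact sdBr_homJacobi hε hLie hrep hX hY hZ
end

section
/- If (A, ·, ⋄, ε, α) is a Hom-Novikov-Poisson color Hom-algebra, then the bracket [x,y] = x⋄y − ε(x,y) y⋄x makes (A, ·, [·,·], ε, α) a transposed Hom-Poisson color Hom-algebra. -/
open scoped TensorProduct

/-!
Write `x · y` for `μ x y`, `x ⋄ y` for `d x y` and `[x, y]` for the bracket `brkt ε d`.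

The cyclic sum in the Jacobi identity of a commutator bracket is an ε-alternating sum of
Hom-associators, which cancels in pairs because the Hom-associator is ε-symmetric in its first two
arguments.

For the transposed Leibniz identity, one copy of `α(z) · [x, y]` comes from
`(z · x) ⋄ α(y) = α(z) · (x ⋄ y)` and its counterpart with `x` and `y` exchanged. The other copy is
`ε(z, x + y) [x, y] · α(z)`, where the second compatibility condition reads
`[x, y] · α(z) = α(x) ⋄ (y · z) - ε(x, y) α(y) ⋄ (x · z)`.
-/

section Commutator

variable {K Γ A : Type*} [Field K] [AddCommGroup A] [Module K A]
variable {𝒜 : Γ → Submodule K A} {ε : Γ → Γ → K} {μ d : A →ₗ[K] A →ₗ[K] A} {α : A →ₗ[K] A}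
variable {γ₁ γ₂ γ₃ : Γ} {x y z : A}

/-- The Hom-associator `(x ⋄ y) ⋄ α(z) - α(x) ⋄ (y ⋄ z)` of a bilinear product `d = ⋄`, which
measures its failure to be Hom-associative. -/
def homAssociator (d : A →ₗ[K] A →ₗ[K] A) (α : A →ₗ[K] A) (x y z : A) : A :=
  d (d x y) (α z) - d (α x) (d y z)

/-- A Hom-left-symmetric (Hom-pre-Lie) color product: the Hom-associator is ε-symmetric in its
first two arguments. As in the other identities, only homogeneous elements are considered. -/
def IsHomLeftSymmetric (𝒜 : Γ → Submodule K A) (ε : Γ → Γ → K) (d : A →ₗ[K] A →ₗ[K] A)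
    (α : A →ₗ[K] A) : Prop :=
  ∀ ⦃γ₁ γ₂ γ₃ : Γ⦄ ⦃x y z : A⦄, x ∈ 𝒜 γ₁ → y ∈ 𝒜 γ₂ → z ∈ 𝒜 γ₃ →
    homAssociator d α x y z = ε γ₁ γ₂ • homAssociator d α y x z

theorem IsHomNovikov.isHomLeftSymmetric (hd : IsHomNovikov 𝒜 ε d α) :
    IsHomLeftSymmetric 𝒜 ε d α :=
  hd.1

theorem HNPCompat.brkt_dot_map (h : HNPCompat 𝒜 ε μ d α)
    (hx : x ∈ 𝒜 γ₁) (hy : y ∈ 𝒜 γ₂) (hz : z ∈ 𝒜 γ₃) :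
    μ (brkt ε d γ₁ γ₂ x y) (α z) = d (α x) (μ y z) - ε γ₁ γ₂ • d (α y) (μ x z) := by
  simp only [brkt, map_sub, map_smul, LinearMap.sub_apply, LinearMap.smul_apply]
  linear_combination (norm := module) h.2 hx hy hz

variable [AddCommGroup Γ]

theorem IsCommFactor.mul_swap (hε : IsCommFactor ε) (γ δ : Γ) : ε γ δ * ε δ γ = 1 :=
  hε.2.1 γ δ

theorem IsCommFactor.add_right (hε : IsCommFactor ε) (γ δ₁ δ₂ : Γ) :
    ε γ (δ₁ + δ₂) = ε γ δ₁ * ε γ δ₂ :=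
  hε.2.2.1 γ δ₁ δ₂

theorem IsCommFactor.add_left (hε : IsCommFactor ε) (γ₁ γ₂ δ : Γ) :
    ε (γ₁ + γ₂) δ = ε γ₁ δ * ε γ₂ δ :=
  hε.2.2.2 γ₁ γ₂ δ

theorem IsCommFactor.mul_add_right_cancel_right (hε : IsCommFactor ε) (γ δ₁ δ₂ : Γ) :
    ε δ₂ γ * ε γ (δ₁ + δ₂) = ε γ δ₁ := by
  rw [hε.add_right, mul_left_comm, hε.mul_swap, mul_one]

theorem IsCommFactor.mul_add_right_cancel_left (hε : IsCommFactor ε) (γ δ₁ δ₂ : Γ) :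
    ε δ₁ γ * ε γ (δ₁ + δ₂) = ε γ δ₂ := by
  rw [add_comm, hε.mul_add_right_cancel_right]

theorem GradedMul.brkt_mem (hd : GradedMul 𝒜 d) (hx : x ∈ 𝒜 γ₁) (hy : y ∈ 𝒜 γ₂) :
    brkt ε d γ₁ γ₂ x y ∈ 𝒜 (γ₁ + γ₂) :=
  sub_mem (hd hx hy) (Submodule.smul_mem _ _ (add_comm γ₂ γ₁ ▸ hd hy hx))

theorem brkt_eq_neg_smul_brkt (hε : IsCommFactor ε) (d : A →ₗ[K] A →ₗ[K] A) (γ₁ γ₂ : Γ) (x y : A) :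
    brkt ε d γ₁ γ₂ x y = -(ε γ₁ γ₂ • brkt ε d γ₂ γ₁ y x) := by
  simp only [brkt, smul_sub, smul_smul, hε.mul_swap, one_smul, neg_sub]

theorem smul_brkt_brkt (hε : IsCommFactor ε) (d : A →ₗ[K] A →ₗ[K] A) (γ₁ γ₂ γ₃ : Γ) (u y z : A) :
    ε γ₃ γ₁ • brkt ε d γ₁ (γ₂ + γ₃) u (brkt ε d γ₂ γ₃ y z)
      = ε γ₃ γ₁ • d u (d y z) - (ε γ₂ γ₃ * ε γ₃ γ₁) • d u (d z y)
        - ε γ₁ γ₂ • d (d y z) u + (ε γ₁ γ₂ * ε γ₂ γ₃) • d (d z y) u := by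
  simp only [brkt, map_sub, map_smul, LinearMap.sub_apply, LinearMap.smul_apply, smul_sub,
    smul_smul, hε.mul_add_right_cancel_right, ← mul_assoc]
  module

theorem cyclic_sum_brkt_brkt_eq_homAssociator (hε : IsCommFactor ε) (d : A →ₗ[K] A →ₗ[K] A)
    (α : A →ₗ[K] A) (γ₁ γ₂ γ₃ : Γ) (x y z : A) :
    ε γ₃ γ₁ • brkt ε d γ₁ (γ₂ + γ₃) (α x) (brkt ε d γ₂ γ₃ y z)
        + ε γ₁ γ₂ • brkt ε d γ₂ (γ₃ + γ₁) (α y) (brkt ε d γ₃ γ₁ z x)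
        + ε γ₂ γ₃ • brkt ε d γ₃ (γ₁ + γ₂) (α z) (brkt ε d γ₁ γ₂ x y)
      = -(ε γ₃ γ₁ • (homAssociator d α x y z - ε γ₁ γ₂ • homAssociator d α y x z)
        + ε γ₁ γ₂ • (homAssociator d α y z x - ε γ₂ γ₃ • homAssociator d α z y x)
        + ε γ₂ γ₃ • (homAssociator d α z x y - ε γ₃ γ₁ • homAssociator d α x z y)) := by
  simp only [smul_brkt_brkt hε, homAssociator]
  module

theorem IsHomLeftSymmetric.brkt_jacobi (hd : IsHomLeftSymmetric 𝒜 ε d α) (hε : IsCommFactor ε)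
    (hx : x ∈ 𝒜 γ₁) (hy : y ∈ 𝒜 γ₂) (hz : z ∈ 𝒜 γ₃) :
    ε γ₃ γ₁ • brkt ε d γ₁ (γ₂ + γ₃) (α x) (brkt ε d γ₂ γ₃ y z)
      + ε γ₁ γ₂ • brkt ε d γ₂ (γ₃ + γ₁) (α y) (brkt ε d γ₃ γ₁ z x)
      + ε γ₂ γ₃ • brkt ε d γ₃ (γ₁ + γ₂) (α z) (brkt ε d γ₁ γ₂ x y) = 0 := by
  rw [cyclic_sum_brkt_brkt_eq_homAssociator hε, sub_eq_zero_of_eq (hd hx hy hz),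
    sub_eq_zero_of_eq (hd hy hz hx), sub_eq_zero_of_eq (hd hz hx hy)]
  simp only [smul_zero, add_zero, neg_zero]

theorem HNPCompat.dot_diam_map (h : HNPCompat 𝒜 ε μ d α) (hε : IsCommFactor ε)
    (hd : GradedMul 𝒜 d) (hα : GradedEnd 𝒜 α) (hμ : IsEpsComm 𝒜 ε μ)
    (hx : x ∈ 𝒜 γ₁) (hy : y ∈ 𝒜 γ₂) (hz : z ∈ 𝒜 γ₃) :
    d (μ x y) (α z) = μ (α x) (d y z) :=
  calc d (μ x y) (α z)
    _ = ε γ₁ γ₂ • d (μ y x) (α z) := by rw [hμ hx hy, map_smul, LinearMap.smul_apply]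
    _ = ε γ₁ (γ₂ + γ₃) • μ (d y z) (α x) := by rw [h.1 hy hx hz, smul_smul, hε.add_right]
    _ = μ (α x) (d y z) := (hμ (hα hx) (hd hy hz)).symm

theorem HNPCompat.map_dot_brkt_eq_dot_diam_map_sub (h : HNPCompat 𝒜 ε μ d α)
    (hε : IsCommFactor ε) (hd : GradedMul 𝒜 d) (hα : GradedEnd 𝒜 α) (hμ : IsEpsComm 𝒜 ε μ)
    (hx : x ∈ 𝒜 γ₁) (hy : y ∈ 𝒜 γ₂) (hz : z ∈ 𝒜 γ₃) :
    μ (α z) (brkt ε d γ₁ γ₂ x y) = d (μ z x) (α y) - ε γ₁ γ₂ • d (μ z y) (α x) := by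
  rw [brkt, map_sub, map_smul, h.dot_diam_map hε hd hα hμ hz hx hy,
    h.dot_diam_map hε hd hα hμ hz hy hx]

theorem HNPCompat.map_dot_brkt_eq_map_diam_dot_sub (h : HNPCompat 𝒜 ε μ d α)
    (hε : IsCommFactor ε) (hd : GradedMul 𝒜 d) (hα : GradedEnd 𝒜 α) (hμ : IsEpsComm 𝒜 ε μ)
    (hx : x ∈ 𝒜 γ₁) (hy : y ∈ 𝒜 γ₂) (hz : z ∈ 𝒜 γ₃) :
    μ (α z) (brkt ε d γ₁ γ₂ x y)
      = ε γ₃ γ₁ • d (α x) (μ z y) - ε (γ₃ + γ₁) γ₂ • d (α y) (μ z x) :=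
  calc μ (α z) (brkt ε d γ₁ γ₂ x y)
    _ = ε γ₃ (γ₁ + γ₂) • μ (brkt ε d γ₁ γ₂ x y) (α z) := hμ (hα hz) (hd.brkt_mem hx hy)
    _ = ε γ₃ (γ₁ + γ₂) • (d (α x) (μ y z) - ε γ₁ γ₂ • d (α y) (μ x z)) := by
      rw [h.brkt_dot_map hx hy hz]
    _ = ε γ₃ γ₁ • d (α x) (μ z y) - ε (γ₃ + γ₁) γ₂ • d (α y) (μ z x) := by
      rw [hμ hz hy, hμ hz hx, map_smul, map_smul, hε.add_right, hε.add_left]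
      module

theorem HNPCompat.transposed_leibniz_brkt (h : HNPCompat 𝒜 ε μ d α) (hε : IsCommFactor ε)
    (hd : GradedMul 𝒜 d) (hα : GradedEnd 𝒜 α) (hμ : IsEpsComm 𝒜 ε μ)
    (hx : x ∈ 𝒜 γ₁) (hy : y ∈ 𝒜 γ₂) (hz : z ∈ 𝒜 γ₃) :
    (2 : K) • μ (α z) (brkt ε d γ₁ γ₂ x y)
      = brkt ε d (γ₃ + γ₁) γ₂ (μ z x) (α y)
        + ε γ₃ γ₁ • brkt ε d γ₁ (γ₃ + γ₂) (α x) (μ z y) :=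
  calc (2 : K) • μ (α z) (brkt ε d γ₁ γ₂ x y)
    _ = (d (μ z x) (α y) - ε γ₁ γ₂ • d (μ z y) (α x))
        + (ε γ₃ γ₁ • d (α x) (μ z y) - ε (γ₃ + γ₁) γ₂ • d (α y) (μ z x)) := by
      rw [← h.map_dot_brkt_eq_dot_diam_map_sub hε hd hα hμ hx hy hz,
        ← h.map_dot_brkt_eq_map_diam_dot_sub hε hd hα hμ hx hy hz, two_smul]
    _ = brkt ε d (γ₃ + γ₁) γ₂ (μ z x) (α y)
        + ε γ₃ γ₁ • brkt ε d γ₁ (γ₃ + γ₂) (α x) (μ z y) := by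
      rw [brkt, brkt, smul_sub, smul_smul, hε.mul_add_right_cancel_left]
      abel

end Commutator

theorem homNovikovPoisson_to_transposedHomPoisson_general
    {K Γ A : Type*} [Field K] [AddCommGroup Γ] [AddCommGroup A] [Module K A]
    (𝒜 : Γ → Submodule K A) (ε : Γ → Γ → K)
    (μ d : A →ₗ[K] A →ₗ[K] A) (α : A →ₗ[K] A)
    (hε : IsCommFactor ε) (hd : GradedMul 𝒜 d) (hα : GradedEnd 𝒜 α)
    (hμ : IsEpsComm 𝒜 ε μ) (hls : IsHomLeftSymmetric 𝒜 ε d α) (hcompat : HNPCompat 𝒜 ε μ d α) :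
    (∀ ⦃γ₁ γ₂ : Γ⦄ ⦃x y : A⦄, x ∈ 𝒜 γ₁ → y ∈ 𝒜 γ₂ →
        brkt ε d γ₁ γ₂ x y ∈ 𝒜 (γ₁ + γ₂)) ∧
    (∀ ⦃γ₁ γ₂ : Γ⦄ ⦃x y : A⦄, x ∈ 𝒜 γ₁ → y ∈ 𝒜 γ₂ →
        brkt ε d γ₁ γ₂ x y = -(ε γ₁ γ₂ • brkt ε d γ₂ γ₁ y x)) ∧
    (∀ ⦃γ₁ γ₂ γ₃ : Γ⦄ ⦃x y z : A⦄, x ∈ 𝒜 γ₁ → y ∈ 𝒜 γ₂ → z ∈ 𝒜 γ₃ →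
        ε γ₃ γ₁ • brkt ε d γ₁ (γ₂ + γ₃) (α x) (brkt ε d γ₂ γ₃ y z)
          + ε γ₁ γ₂ • brkt ε d γ₂ (γ₃ + γ₁) (α y) (brkt ε d γ₃ γ₁ z x)
          + ε γ₂ γ₃ • brkt ε d γ₃ (γ₁ + γ₂) (α z) (brkt ε d γ₁ γ₂ x y) = 0) ∧
    (∀ ⦃γ₁ γ₂ γ₃ : Γ⦄ ⦃x y z : A⦄, x ∈ 𝒜 γ₁ → y ∈ 𝒜 γ₂ → z ∈ 𝒜 γ₃ →
        (2 : K) • μ (α z) (brkt ε d γ₁ γ₂ x y)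
          = brkt ε d (γ₃ + γ₁) γ₂ (μ z x) (α y)
            + ε γ₃ γ₁ • brkt ε d γ₁ (γ₃ + γ₂) (α x) (μ z y)) := by
  refine ⟨?_, ?_, ?_, ?_⟩
  · intro γ₁ γ₂ x y hx hy
    exact hd.brkt_mem hx hy
  · intro γ₁ γ₂ x y _ _
    exact brkt_eq_neg_smul_brkt hε d γ₁ γ₂ x y
  · intro γ₁ γ₂ γ₃ x y z hx hy hz
    exact hls.brkt_jacobi hε hx hy hz
  · intro γ₁ γ₂ γ₃ x y z hx hy hz
    exact hcompat.transposed_leibniz_brkt hε hd hα hμ hx hy hz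

/-- the ε-commutator of the Novikov product of a Hom-Novikov-Poisson
color Hom-algebra yields a transposed Hom-Poisson color Hom-algebra. -/
theorem homNovikovPoisson_to_transposedHomPoisson
    {K Γ A : Type*} [Field K] [AddCommGroup Γ] [AddCommGroup A] [Module K A]
    (𝒜 : Γ → Submodule K A) (ε : Γ → Γ → K)
    (μ d : A →ₗ[K] A →ₗ[K] A) (α : A →ₗ[K] A)
    (hε : IsCommFactor ε) (hHNP : IsHNP 𝒜 ε μ d α) :
    (∀ ⦃γ₁ γ₂ : Γ⦄ ⦃x y : A⦄, x ∈ 𝒜 γ₁ → y ∈ 𝒜 γ₂ →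
        brkt ε d γ₁ γ₂ x y ∈ 𝒜 (γ₁ + γ₂)) ∧
    (∀ ⦃γ₁ γ₂ : Γ⦄ ⦃x y : A⦄, x ∈ 𝒜 γ₁ → y ∈ 𝒜 γ₂ →
        brkt ε d γ₁ γ₂ x y = -(ε γ₁ γ₂ • brkt ε d γ₂ γ₁ y x)) ∧
    (∀ ⦃γ₁ γ₂ γ₃ : Γ⦄ ⦃x y z : A⦄, x ∈ 𝒜 γ₁ → y ∈ 𝒜 γ₂ → z ∈ 𝒜 γ₃ →
        ε γ₃ γ₁ • brkt ε d γ₁ (γ₂ + γ₃) (α x) (brkt ε d γ₂ γ₃ y z)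
          + ε γ₁ γ₂ • brkt ε d γ₂ (γ₃ + γ₁) (α y) (brkt ε d γ₃ γ₁ z x)
          + ε γ₂ γ₃ • brkt ε d γ₃ (γ₁ + γ₂) (α z) (brkt ε d γ₁ γ₂ x y) = 0) ∧
    (∀ ⦃γ₁ γ₂ γ₃ : Γ⦄ ⦃x y z : A⦄, x ∈ 𝒜 γ₁ → y ∈ 𝒜 γ₂ → z ∈ 𝒜 γ₃ →
        (2 : K) • μ (α z) (brkt ε d γ₁ γ₂ x y)
          = brkt ε d (γ₃ + γ₁) γ₂ (μ z x) (α y)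
            + ε γ₃ γ₁ • brkt ε d γ₁ (γ₃ + γ₂) (α x) (μ z y)) := by
  obtain ⟨-, hd, hα, hμ, -, hNovikov, hcompat⟩ := hHNP
  exact homNovikovPoisson_to_transposedHomPoisson_general 𝒜 ε μ d α hε hd hα hμ
    hNovikov.isHomLeftSymmetric hcompat
end
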